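/- Let M be a lattice log concave integer-valued random variable with support S. Then for all x, d ∈ ℤ with x ∈ S, d+1 ∈ S and x ≥ d, one has P(M ≥ x+1) · P(M = d) ≤ P(M ≥ d+1) · P(M = x); equivalently, the quantity π_x^{(d)} = P(M ≥ x+1)P(M = d) / (P(M ≥ d+1)P(M = x)) satisfies 0 ≤ π_x^{(d)} ≤ 1. -/

import Mathlib

open MeasureTheory

/-- The law of a lattice log concave integer valued random variable, presented as a
probability measure `μ` on `ℤ`: the support is an integer interval and the point
masses satisfy `p_{x-1} p_{x+1} ≤ p_x ^ 2`. -/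
def IsLatticeLogConcave (μ : Measure ℤ) : Prop :=
  (∀ x y z : ℤ, x ≤ y → y ≤ z → μ {x} ≠ 0 → μ {z} ≠ 0 → μ {y} ≠ 0) ∧
  (∀ x : ℤ, (μ {x - 1}).toReal * (μ {x + 1}).toReal ≤ (μ {x}).toReal ^ 2)

/-! With `p n = P(M = n)`, log-concavity without internal zeros says that the ratio
`p (n + 1) / p n` is antitone on the support, and then so is each `p (n + k) / p n` with `0 ≤ k`.
Cross-multiplying, `p (b + k) * p a ≤ p (a + k) * p b` for `a ≤ b`; summing over `k ≥ 1` gives the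
inequality between the tails. -/

/-- A nonnegative log-concave sequence indexed by `ℤ`. As usual in the discrete setting, the
sequence is required to have no internal zeros: its support is an interval. -/
structure IsLogConcaveSeq {R : Type*} [Semiring R] [PartialOrder R] (p : ℤ → R) : Prop where
  nonneg : ∀ n, 0 ≤ p n
  ordConnected_support : (Function.support p).OrdConnected
  mul_le_sq : ∀ n, p (n - 1) * p (n + 1) ≤ p n ^ 2

namespace IsLogConcaveSeq

section Semiring

variable {R : Type*} [Semiring R] [PartialOrder R] {p : ℤ → R}

theorem pos_of_mem_support (hp : IsLogConcaveSeq p) {n : ℤ} (hn : n ∈ Function.support p) :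
    0 < p n :=
  (hp.nonneg n).lt_of_ne' hn

theorem eq_zero_of_le (hp : IsLogConcaveSeq p) {a b c : ℤ} (ha : p a ≠ 0) (hb : p b = 0)
    (hab : a ≤ b) (hbc : b ≤ c) : p c = 0 := by
  by_contra hc
  exact hp.ordConnected_support.out ha hc ⟨hab, hbc⟩ hb

end Semiring

section Semifield

variable {K : Type*} [Semifield K] [LinearOrder K] [IsStrictOrderedRing K] {p : ℤ → K}

theorem antitoneOn_add_one_div (hp : IsLogConcaveSeq p) :
    AntitoneOn (fun n ↦ p (n + 1) / p n) (Function.support p) := by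
  refine antitoneOn_of_add_one_le hp.ordConnected_support fun n _ hn hn' ↦ ?_
  rw [div_le_div_iff₀ (hp.pos_of_mem_support hn') (hp.pos_of_mem_support hn), ← sq, mul_comm]
  simpa only [add_sub_cancel_right] using hp.mul_le_sq (n + 1)

theorem antitoneOn_add_div (hp : IsLogConcaveSeq p) {k : ℤ} (hk : 0 ≤ k) :
    AntitoneOn (fun n ↦ p (n + k) / p n) (Function.support p) := by
  refine antitoneOn_of_add_one_le hp.ordConnected_support fun n _ hn hn' ↦ ?_
  have hn_pos := hp.pos_of_mem_support hn
  rw [div_le_div_iff₀ (hp.pos_of_mem_support hn') hn_pos, add_right_comm, mul_comm (p (n + k))]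
  by_cases hnk : p (n + k) = 0
  · have hnk' : p (n + k + 1) = 0 := hp.eq_zero_of_le hn hnk (by lia) (by lia)
    simp only [hnk, hnk', zero_mul, mul_zero, le_refl]
  · have ratio_le := hp.antitoneOn_add_one_div hn hnk (le_add_of_nonneg_right hk)
    exact (div_le_div_iff₀ (hp.pos_of_mem_support hnk) hn_pos).1 ratio_le

theorem add_mul_le_add_mul (hp : IsLogConcaveSeq p) {a b k : ℤ} (hab : a ≤ b) (hk : 0 ≤ k) :
    p (b + k) * p a ≤ p (a + k) * p b := by
  have rhs_nonneg : 0 ≤ p (a + k) * p b := mul_nonneg (hp.nonneg _) (hp.nonneg _)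
  by_cases ha : p a = 0
  · rwa [ha, mul_zero]
  by_cases hb : p b = 0
  · rwa [hp.eq_zero_of_le ha hb hab (le_add_of_nonneg_right hk), zero_mul]
  exact (div_le_div_iff₀ (hp.pos_of_mem_support hb) (hp.pos_of_mem_support ha)).1
    (hp.antitoneOn_add_div hk ha hb hab)

end Semifield

end IsLogConcaveSeq

theorem measure_Ici_eq_tsum (μ : Measure ℤ) (n : ℤ) :
    μ (Set.Ici n) = ∑' k : ℕ, μ {n + (k : ℤ)} := by
  have Ici_eq_iUnion : Set.Ici n = ⋃ k : ℕ, {n + (k : ℤ)} := by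
    ext m
    simp only [Set.mem_Ici, Set.mem_iUnion, Set.mem_singleton_iff]
    exact ⟨fun hnm ↦ ⟨(m - n).toNat, by lia⟩, by lia⟩
  rw [Ici_eq_iUnion, measure_iUnion _ fun _ ↦ measurableSet_singleton _]
  intro i j hij
  simpa only [Function.onFun, Set.disjoint_singleton, ne_eq, add_right_inj, Nat.cast_inj] using hij

namespace IsLatticeLogConcave

variable {μ : Measure ℤ} [IsLocallyFiniteMeasure μ]

theorem isLogConcaveSeq (hμ : IsLatticeLogConcave μ) : IsLogConcaveSeq fun n ↦ μ.real {n} where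
  nonneg _ := measureReal_nonneg
  ordConnected_support := by
    have support_eq : (Function.support fun n ↦ μ.real {n}) = {n | μ {n} ≠ 0} := by
      ext n
      exact measureReal_ne_zero_iff isCompact_singleton.measure_ne_top
    rw [support_eq]
    exact ⟨fun x hx z hz y hy ↦ hμ.1 x y z hy.1 hy.2 hx hz⟩
  mul_le_sq := hμ.2

theorem measure_singleton_add_mul_le (hμ : IsLatticeLogConcave μ) {a b k : ℤ} (hab : a ≤ b)
    (hk : 0 ≤ k) : μ {b + k} * μ {a} ≤ μ {a + k} * μ {b} := by
  have mul_ne_top (m n : ℤ) : μ {m} * μ {n} ≠ ⊤ :=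
    ENNReal.mul_ne_top isCompact_singleton.measure_ne_top isCompact_singleton.measure_ne_top
  rw [← ENNReal.toReal_le_toReal (mul_ne_top _ _) (mul_ne_top _ _), ENNReal.toReal_mul,
    ENNReal.toReal_mul]
  exact hμ.isLogConcaveSeq.add_mul_le_add_mul hab hk

end IsLatticeLogConcave

-- The tails may be infinite, as for the counting measure, and `toReal` would then send them to `0`;
-- hence the values in `ℝ≥0∞`.
theorem pi_le_one_of_latticeLogConcave_general {μ : Measure ℤ} [IsLocallyFiniteMeasure μ]
    (hLC : IsLatticeLogConcave μ) {d x k : ℤ} (hdx : d ≤ x) (hk : 0 ≤ k) :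
    μ (Set.Ici (x + k)) * μ {d} ≤ μ (Set.Ici (d + k)) * μ {x} := by
  simp only [measure_Ici_eq_tsum, ← ENNReal.tsum_mul_right, add_assoc]
  exact ENNReal.tsum_le_tsum fun j ↦ hLC.measure_singleton_add_mul_le hdx (by positivity)

/-- For a lattice log concave random variable `M`, whenever `x` and `d + 1` lie in the
support and `d ≤ x`, one has `P(M ≥ x+1) P(M = d) ≤ P(M ≥ d+1) P(M = x)`; i.e., the
quantity `π_x^{(d)}` lies in `[0, 1]`. -/
theorem pi_le_one_of_latticeLogConcave (μ : Measure ℤ) [IsProbabilityMeasure μ]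
    (hLC : IsLatticeLogConcave μ) :
    ∀ x d : ℤ, μ {x} ≠ 0 → μ {d + 1} ≠ 0 → d ≤ x →
      (μ (Set.Ici (x + 1))).toReal * (μ {d}).toReal ≤
        (μ (Set.Ici (d + 1))).toReal * (μ {x}).toReal := by
  intro x d _ _ hdx
  simpa only [ENNReal.toReal_mul] using ENNReal.toReal_mono (by finiteness)
    (pi_le_one_of_latticeLogConcave_general hLC hdx zero_le_one)
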